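/- The limit distribution function F of the Calkin–Wilf tree satisfies the reflection symmetry F(y) + F(1/y) = 1 for every real y > 0. -/

import Mathlib

open Filter

/-- The generations of the Calkin–Wilf tree: `CW 0 = [1/1]` is the first
generation, and each generation is obtained from the previous one by replacing
each entry `x` by `x/(x+1)` and `x+1`, in this order.  Thus the `n`-th
generation of the paper is `CW (n-1)`. -/
def CW : ℕ → List ℚ
  | 0 => [1]
  | n + 1 => (CW n).flatMap (fun x => [x / (x + 1), x + 1])

open scoped Classical in
/-- `Fcw n` is the distribution function of the `(n+1)`-st generation of the
Calkin–Wilf tree: `Fcw (n-1) x = F_n(x) = 2^(1-n) · #{j : x_j^(n) ≤ x}`. -/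
noncomputable def Fcw (n : ℕ) (x : ℝ) : ℝ :=
  ((CW n).countP (fun q => decide ((q : ℝ) ≤ x))) / 2 ^ n

/-!
Reciprocation swaps the two children of `x` with those of `x⁻¹`, so each generation is closed under
`x ↦ x⁻¹`. Hence `F_n(1/y)` is the proportion of entries that are at least `y`, and
`F_n(y) + F_n(1/y)` exceeds `1` exactly by the proportion of entries equal to `y`. The entries of a
generation are distinct, so this excess is at most `2^(1-n)` and vanishes in the limit.
-/

theorem countP_le_add_countP_ge {α : Type*} [LinearOrder α] (a : α) (l : List α) :
    l.countP (· ≤ a) + l.countP (a ≤ ·) = l.length + l.count a := by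
  induction l with
  | nil => rfl
  | cons b l ih =>
    simp only [List.countP_cons, List.count_cons, List.length_cons, decide_eq_true_eq, beq_iff_eq]
    grind

theorem countP_le_inv_of_map_inv_perm {α : Type*} [GroupWithZero α] [PartialOrder α]
    [PosMulReflectLT α] [MulPosReflectLT α] [DecidableLE α] {l : List α} (hl : (l.map (·⁻¹)).Perm l)
    (hpos : ∀ x ∈ l, 0 < x) {a : α} (ha : 0 < a) :
    l.countP (· ≤ a⁻¹) = l.countP (a ≤ ·) := by
  rw [← hl.countP_eq, List.countP_map]
  refine List.countP_congr fun x hx => ?_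
  simpa only [Function.comp_apply, decide_eq_true_eq] using inv_le_inv₀ (hpos x hx) ha

theorem injOn_div_add_one {K : Type*} [Field K] :
    Set.InjOn (fun x : K => x / (x + 1)) {x | x + 1 ≠ 0} := by
  intro a ha b hb hab
  have hcross : a * (b + 1) = b * (a + 1) := (div_eq_div_iff ha hb).mp hab
  linear_combination hcross

theorem CW_succ_perm (n : ℕ) :
    (CW (n + 1)).Perm ((CW n).map (fun x => x / (x + 1)) ++ (CW n).map (· + 1)) := by
  simpa only [CW, List.map_eq_flatMap] using
    (List.map_append_flatMap_perm (CW n) (fun x => x / (x + 1)) (fun x => [x + 1])).symm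

theorem length_CW (n : ℕ) : (CW n).length = 2 ^ n := by
  induction n with
  | zero => rfl
  | succ n ih =>
    rw [(CW_succ_perm n).length_eq, List.length_append, List.length_map, List.length_map, ih,
      pow_succ, mul_two]

theorem pos_of_mem_CW {n : ℕ} {x : ℚ} (hx : x ∈ CW n) : 0 < x := by
  induction n generalizing x with
  | zero => simp_all [CW]
  | succ n ih =>
    rw [(CW_succ_perm n).mem_iff, List.mem_append, List.mem_map, List.mem_map] at hx
    obtain ⟨a, ha, rfl⟩ | ⟨a, ha, rfl⟩ := hx <;> have := ih ha <;> positivity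

theorem nodup_CW (n : ℕ) : (CW n).Nodup := by
  induction n with
  | zero => exact List.nodup_singleton 1
  | succ n ih =>
    rw [(CW_succ_perm n).nodup_iff]
    refine List.Nodup.append ?_ (ih.map (add_left_injective 1)) ?_
    · exact ih.map_on fun a ha b hb hab =>
        injOn_div_add_one (add_pos (pos_of_mem_CW ha) one_pos).ne'
          (add_pos (pos_of_mem_CW hb) one_pos).ne' hab
    · simp only [List.disjoint_left, List.mem_map]
      rintro _ ⟨a, ha, rfl⟩ ⟨b, hb, hab⟩
      have ha_pos : 0 < a := pos_of_mem_CW ha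
      have hb_pos : 0 < b := pos_of_mem_CW hb
      have hlt : a / (a + 1) < 1 := (div_lt_one (by positivity)).mpr (lt_add_one a)
      linarith

theorem map_inv_CW_perm (n : ℕ) : ((CW n).map (·⁻¹)).Perm (CW n) := by
  induction n with
  | zero => simp [CW]
  | succ n ih =>
    refine List.Perm.trans ?_ (ih.flatMap_right _)
    rw [CW, List.map_flatMap, List.flatMap_map]
    refine List.Perm.flatMap_left _ fun x hx => ?_
    have hx_pos : 0 < x := pos_of_mem_CW hx
    have hleft : (x / (x + 1))⁻¹ = x⁻¹ + 1 := by field_simp; ring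
    have hright : (x + 1)⁻¹ = x⁻¹ / (x⁻¹ + 1) := by field_simp; ring
    rw [List.map_cons, List.map_singleton, hleft, hright]
    exact List.Perm.swap _ _ _

-- In `Fcw` the coercion to `ℝ` is elaborated as a monadic lift of the list `CW n`.
theorem Fcw_eq_countP_map_cast (n : ℕ) (x : ℝ) :
    Fcw n x = ((CW n).map (Rat.cast : ℚ → ℝ)).countP (· ≤ x) / 2 ^ n := by
  simp only [Fcw, List.bind_eq_flatMap, List.pure_def, ← List.map_eq_flatMap]

theorem Fcw_add_Fcw_one_div (n : ℕ) {y : ℝ} (hy : 0 < y) :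
    Fcw n y + Fcw n (1 / y) = 1 + ((CW n).map (Rat.cast : ℚ → ℝ)).count y / 2 ^ n := by
  set l := (CW n).map (Rat.cast : ℚ → ℝ) with hl
  have hpos : ∀ x ∈ l, 0 < x := by
    simpa only [hl, List.forall_mem_map, Rat.cast_pos] using fun x => pos_of_mem_CW
  have hperm : (l.map (·⁻¹)).Perm l := by
    simpa only [hl, List.map_map, Function.comp_def, Rat.cast_inv] using
      (map_inv_CW_perm n).map (Rat.cast : ℚ → ℝ)
  have hcount : l.countP (· ≤ y) + l.countP (· ≤ y⁻¹) = 2 ^ n + l.count y := by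
    rw [countP_le_inv_of_map_inv_perm hperm hpos hy, countP_le_add_countP_ge, hl, List.length_map,
      length_CW]
  rw [Fcw_eq_countP_map_cast, Fcw_eq_countP_map_cast, ← hl, one_div, ← add_div,
    one_add_div (by positivity)]
  exact_mod_cast congrArg (fun k : ℕ => (k : ℝ) / 2 ^ n) hcount

theorem tendsto_count_CW_div_two_pow (y : ℝ) :
    Tendsto (fun n => (((CW n).map (Rat.cast : ℚ → ℝ)).count y : ℝ) / 2 ^ n) atTop (nhds 0) := by
  have hcount (n : ℕ) : ((CW n).map (Rat.cast : ℚ → ℝ)).count y ≤ 1 :=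
    List.nodup_iff_count_le_one.mp ((nodup_CW n).map Rat.cast_injective) y
  refine squeeze_zero (fun n => by positivity) (fun n => ?_)
    (tendsto_pow_atTop_nhds_zero_of_lt_one one_half_pos.le (one_half_lt_one (α := ℝ)))
  rw [one_div_pow]
  gcongr
  exact_mod_cast hcount n

theorem tendsto_Fcw_add_Fcw_one_div {y : ℝ} (hy : 0 < y) :
    Tendsto (fun n => Fcw n y + Fcw n (1 / y)) atTop (nhds 1) := by
  simpa only [Fcw_add_Fcw_one_div _ hy, add_zero] using
    (tendsto_count_CW_div_two_pow y).const_add 1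

/-- The limit distribution function `F` of the Calkin–Wilf tree satisfies the
reflection symmetry `F(y) + F(1/y) = 1` for every real `y > 0`. -/
theorem calkin_wilf_limit_distribution_reflection (F : ℝ → ℝ)
    (hF : ∀ x : ℝ, 0 ≤ x → Tendsto (fun n => Fcw n x) atTop (nhds (F x)))
    (y : ℝ) (hy : 0 < y) :
    F y + F (1 / y) = 1 :=
  tendsto_nhds_unique ((hF y hy.le).add (hF (1 / y) (one_div_pos.mpr hy).le))
    (tendsto_Fcw_add_Fcw_one_div hy)
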